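/- Let 𝒜 = ((a_{N,n})_{N∈ℕ})_{n∈ℕ} be a double sequence of weights on 𝔻 with a_{N,n+1} ≤ a_{N,n} ≤ a_{N+1,n} pointwise, satisfying condition (LOG). Then the equality of sets ⋂_N ⋃_n Ha_{N,n}(𝔻) = ⋃_n ⋂_N Ha_{N,n}(𝔻) holds (i.e. AH(𝔻) = 𝒱H(𝔻) algebraically) if and only if 𝒜 satisfies condition (B)~. -/

import Mathlib

noncomputable section

open Complex

/-- The open unit disc in ℂ. -/
def uD : Set ℂ := {z : ℂ | ‖z‖ < 1}

/-- Holomorphic on the unit disc. -/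
def Holo (f : ℂ → ℂ) : Prop := DifferentiableOn ℂ f uD

/-- A weight on 𝔻: continuous and strictly positive. -/
def IsWeight (v : ℂ → ℝ) : Prop :=
  ContinuousOn v uD ∧ ∀ z ∈ uD, 0 < v z

/-- Radial weight. -/
def Radial (v : ℂ → ℝ) : Prop :=
  ∀ z ∈ uD, ∀ w ∈ uD, ‖z‖ = ‖w‖ → v z = v w

/-- Non-increasing in the modulus. -/
def NonInc (v : ℂ → ℝ) : Prop :=
  ∀ z ∈ uD, ∀ w ∈ uD, ‖z‖ ≤ ‖w‖ → v w ≤ v z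

/-- r₀ = 0, r_κ = 1 - 2^(-2^κ) for κ ≥ 1. -/
def rseq (κ : ℕ) : ℝ := if κ = 0 then 0 else 1 - 1 / 2 ^ (2 ^ κ)

/-- Condition (LOG 1) for a single radial weight. -/
def Log1 (A : ℝ) (v : ℂ → ℝ) : Prop :=
  ∀ κ : ℕ, v (rseq κ : ℂ) ≤ A * v (rseq (κ + 1) : ℂ)

/-- Condition (LOG 2) for a single radial weight. -/
def Log2 (a : ℝ) (v : ℂ → ℝ) : Prop :=
  ∀ κ : ℕ, v (rseq (κ + 1) : ℂ) ≤ a * v (rseq κ : ℂ)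

/-- The weight tends to 0 as |z| → 1. -/
def VanishAtOne (v : ℂ → ℝ) : Prop :=
  ∀ ε > 0, ∃ r : ℝ, r < 1 ∧ ∀ z ∈ uD, r ≤ ‖z‖ → v z ≤ ε

/-- Associated growth function w~ of a growth condition w. -/
def growthTilde (w : ℂ → ℝ) (z : ℂ) : ℝ :=
  sSup {t : ℝ | ∃ g : ℂ → ℂ, Holo g ∧ (∀ x ∈ uD, ‖g x‖ ≤ w x) ∧ t = ‖g z‖}

/-- Associated weight ṽ = 1/(1/v)~. -/
def assocWeight (v : ℂ → ℝ) (z : ℂ) : ℝ := (growthTilde (fun x => 1 / v x) z)⁻¹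

/-- Monotonicity of the double sequence: decreasing in n, increasing in N. -/
def MonoSeq (a : ℕ → ℕ → ℂ → ℝ) : Prop :=
  ∀ N n, ∀ z ∈ uD, a N (n + 1) z ≤ a N n z ∧ a N n z ≤ a (N + 1) n z

/-- Condition (LOG) for a double sequence with constants 0 < a < 1 < A. -/
def SeqLOG (aa A : ℝ) (a : ℕ → ℕ → ℂ → ℝ) : Prop :=
  ∀ N n, Radial (a N n) ∧ NonInc (a N n) ∧ VanishAtOne (a N n) ∧
    Log1 A (a N n) ∧ Log2 aa (a N n)

/-- Condition (Q). -/
def CondQ (a : ℕ → ℕ → ℂ → ℝ) : Prop :=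
  ∀ N, ∃ M ≥ N, ∃ n, ∀ K ≥ M, ∀ m, ∀ ε > 0, ∃ k, ∃ S > 0,
    ∀ z ∈ uD, 1 / a M m z ≤ max (ε / a N n z) (S / a K k z)

/-- Condition (wQ). -/
def CondwQ (a : ℕ → ℕ → ℂ → ℝ) : Prop :=
  ∀ N, ∃ M ≥ N, ∃ n, ∀ K ≥ M, ∀ m, ∃ k, ∃ S > 0,
    ∀ z ∈ uD, 1 / a M m z ≤ max (S / a N n z) (S / a K k z)

/-- Condition (Q)~. -/
def CondQTilde (a : ℕ → ℕ → ℂ → ℝ) : Prop :=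
  ∀ N, ∃ M ≥ N, ∃ n, ∀ K ≥ M, ∀ m, ∀ ε > 0, ∃ k, ∃ S > 0,
    ∀ z ∈ uD, growthTilde (fun x => 1 / a M m x) z ≤
      growthTilde (fun x => max (ε / a N n x) (S / a K k x)) z

/-- Pointwise maximum max_{N=1,…,L} a_{N,n(N)}. -/
def finMax (a : ℕ → ℕ → ℂ → ℝ) (nn : ℕ → ℕ) (L : ℕ) (z : ℂ) : ℝ :=
  sSup {t : ℝ | ∃ N, 1 ≤ N ∧ N ≤ L ∧ t = a N (nn N) z}

/-- Condition (B). -/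
def CondB (a : ℕ → ℕ → ℂ → ℝ) : Prop :=
  ∀ nn : ℕ → ℕ, ∃ m, ∀ M, ∃ L, 1 ≤ L ∧ ∃ c > 0,
    ∀ z ∈ uD, a M m z ≤ c * finMax a nn L z

/-- Condition (B)~. -/
def CondBTilde (a : ℕ → ℕ → ℂ → ℝ) : Prop :=
  ∀ nn : ℕ → ℕ, ∃ m, ∀ M, ∃ L, 1 ≤ L ∧ ∃ c > 0,
    ∀ z ∈ uD, assocWeight (a M m) z ≤ c * assocWeight (finMax a nn L) z

/-- A weight is essential. -/
def Essential (v : ℂ → ℝ) : Prop :=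
  ∃ C > 0, ∀ z ∈ uD,
    growthTilde (fun x => 1 / v x) z ≤ 1 / v z ∧
    1 / v z ≤ C * growthTilde (fun x => 1 / v x) z

/-- Condition (Σ). -/
def CondSigma (a : ℕ → ℕ → ℂ → ℝ) : Prop :=
  ∀ N, ∃ K ≥ N, ∀ k, ∃ n ≥ k, ∀ ε > 0, ∃ Q : Set ℂ,
    IsCompact Q ∧ Q ⊆ uD ∧ ∀ z ∈ uD \ Q, a N n z / a K k z ≤ ε

/-- The Banach space Ha(𝔻) as a set of functions. -/
def HaSet (v : ℂ → ℝ) : Set (ℂ → ℂ) :=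
  {f | Holo f ∧ ∃ C : ℝ, ∀ z ∈ uD, v z * ‖f z‖ ≤ C}

/-!
The monomials `z ^ n_κ` with `n_κ = 2 ^ 2 ^ κ` (and `n_0 = 0`) peak near the radii `r_κ`:
`r_κ ^ n_κ` is bounded below, while on `‖z‖ ≤ r_{κ+1}` the higher ones decay super-exponentially.
For a (LOG) weight `v`, which changes by a bounded factor from one radius to the next, this makes
`v` comparable to its associated weight, and a lacunary series `∑ b_k z ^ n_k` with `b_k ≥ 0`
belongs to `Hv` exactly when `b_k v(r_k)` is bounded. Since maxima of (LOG) weights are again (LOG)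
weights, (B)~ reduces to the condition (B) on the weights themselves.

Condition (B) clearly gives the inclusion of the intersection of unions in the union of
intersections. If (B) fails, it fails along the radii `r_k`, and a diagonal choice of coefficients
supported on sparse indices gives a lacunary series in the first set but not in the second.
-/

open Filter Topology

section Radii

theorem rseq_zero : rseq 0 = 0 := if_pos rfl

theorem rseq_succ (κ : ℕ) : rseq (κ + 1) = 1 - 1 / 2 ^ 2 ^ (κ + 1) := if_neg κ.succ_ne_zero

theorem rseq_nonneg (κ : ℕ) : 0 ≤ rseq κ := by
  cases κ with
  | zero => exact rseq_zero.ge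
  | succ κ =>
    rw [rseq_succ, sub_nonneg]
    exact div_le_one_of_le₀ (one_le_pow₀ one_le_two) (by positivity)

theorem rseq_lt_one (κ : ℕ) : rseq κ < 1 := by
  cases κ with
  | zero => exact rseq_zero.trans_lt one_pos
  | succ κ => rw [rseq_succ]; exact sub_lt_self 1 (by positivity)

theorem norm_rseq (κ : ℕ) : ‖(rseq κ : ℂ)‖ = rseq κ := by
  rw [Complex.norm_real, Real.norm_of_nonneg (rseq_nonneg κ)]

theorem rseq_mem_uD (κ : ℕ) : (rseq κ : ℂ) ∈ uD := (norm_rseq κ).trans_lt (rseq_lt_one κ)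

theorem tendsto_rseq : Tendsto rseq atTop (𝓝 1) := by
  have htwo : Tendsto (fun κ : ℕ => 2 ^ (κ + 1)) atTop atTop :=
    (tendsto_pow_atTop_atTop_of_one_lt one_lt_two).comp (tendsto_add_atTop_nat 1)
  have hhalf := (tendsto_pow_atTop_nhds_zero_of_lt_one (r := (1 / 2 : ℝ))
    (by norm_num) (by norm_num)).comp htwo
  rw [← tendsto_add_atTop_iff_nat 1]
  simpa [rseq_succ] using hhalf.const_sub 1

theorem exists_rseq_le_lt {x : ℝ} (h0 : 0 ≤ x) (h1 : x < 1) :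
    ∃ κ, rseq κ ≤ x ∧ x < rseq (κ + 1) := by
  obtain ⟨κ, hle, hlt⟩ := Nat.exists_not_and_succ_of_not_zero_of_exists
    (p := fun κ => x < rseq κ) (by simpa [rseq_zero] using h0)
    (tendsto_rseq.eventually_const_lt h1).exists
  exact ⟨κ, not_lt.1 hle, hlt⟩

/-- The exponents `n_κ` of the lacunary monomials `z ^ n_κ` peaking at the radii `r_κ`:
`n_κ = 1 / (1 - r_κ)` for `κ ≥ 1`, while `n_0 = 0`. -/
def lacExp (κ : ℕ) : ℕ := if κ = 0 then 0 else 2 ^ 2 ^ κ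

theorem lacExp_zero : lacExp 0 = 0 := if_pos rfl

theorem lacExp_succ (κ : ℕ) : lacExp (κ + 1) = 2 ^ 2 ^ (κ + 1) := if_neg κ.succ_ne_zero

theorem one_fourth_le_one_sub_one_div_pow {m : ℕ} (hm : m ≠ 0) :
    1 / 4 ≤ (1 - 1 / (2 * m : ℝ)) ^ (2 * m) := by
  have hm' : (1 : ℝ) ≤ m := mod_cast Nat.one_le_iff_ne_zero.2 hm
  have hle : 1 / (2 * m : ℝ) ≤ 1 := by rw [div_le_one (by positivity)]; linarith
  have hbernoulli : 1 / 2 ≤ (1 - 1 / (2 * m : ℝ)) ^ m :=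
    calc 1 / 2 = 1 + m * -(1 / (2 * m : ℝ)) := by field_simp; norm_num
      _ ≤ (1 - 1 / (2 * m : ℝ)) ^ m := one_add_mul_le_pow (by linarith) m
  calc (1 / 4 : ℝ) = (1 / 2) ^ 2 := by norm_num
    _ ≤ ((1 - 1 / (2 * m : ℝ)) ^ m) ^ 2 := pow_le_pow_left₀ (by norm_num) hbernoulli 2
    _ = (1 - 1 / (2 * m : ℝ)) ^ (2 * m) := by rw [← pow_mul, mul_comm m 2]

theorem one_fourth_le_rseq_pow_lacExp (κ : ℕ) : 1 / 4 ≤ rseq κ ^ lacExp κ := by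
  cases κ with
  | zero => norm_num [lacExp_zero]
  | succ κ =>
    obtain ⟨p, hp⟩ : ∃ p, 2 ^ (κ + 1) = p + 1 := Nat.exists_eq_succ_of_ne_zero (by positivity)
    simpa [rseq_succ, lacExp_succ, hp, pow_succ'] using
      one_fourth_le_one_sub_one_div_pow (m := 2 ^ p) (by positivity)

theorem rseq_succ_pow_lacExp_le (κ d : ℕ) :
    rseq (κ + 1) ^ lacExp (d + (κ + 1)) ≤ Real.exp (-2 ^ d) := by
  have hexp : d + 2 ^ (κ + 1) ≤ 2 ^ (d + (κ + 1)) := by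
    have hd : d + 1 ≤ 2 ^ d := Nat.lt_two_pow_self
    have hκ : 1 ≤ 2 ^ (κ + 1) := Nat.one_le_two_pow
    rw [pow_add 2 d]
    nlinarith
  have hquot : (2 : ℝ) ^ d ≤ lacExp (d + (κ + 1)) * (1 / 2 ^ 2 ^ (κ + 1)) := by
    rw [mul_one_div, le_div_iff₀ (by positivity), ← pow_add, ← add_assoc, lacExp_succ]
    exact_mod_cast pow_le_pow_right₀ one_le_two hexp
  calc rseq (κ + 1) ^ lacExp (d + (κ + 1))
      ≤ Real.exp (-(1 / 2 ^ 2 ^ (κ + 1))) ^ lacExp (d + (κ + 1)) :=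
        pow_le_pow_left₀ (rseq_nonneg _)
          ((rseq_succ κ).trans_le (Real.one_sub_le_exp_neg _)) _
    _ = Real.exp (lacExp (d + (κ + 1)) * -(1 / 2 ^ 2 ^ (κ + 1))) := (Real.exp_nat_mul _ _).symm
    _ ≤ Real.exp (-2 ^ d) := Real.exp_le_exp.2 (by linarith)

end Radii

section Sequences

theorem summable_pow_mul_exp_neg_two_pow (A : ℝ) :
    Summable fun d : ℕ => A ^ d * Real.exp (-2 ^ d) := by
  obtain ⟨p, hp⟩ := pow_unbounded_of_one_lt |A| one_lt_two
  have hsum : Summable fun d : ℕ => ((2 ^ d : ℕ) : ℝ) ^ p * Real.exp (-1 * (2 ^ d : ℕ)) :=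
    (Real.summable_pow_mul_exp_neg_nat_mul p one_pos).comp_injective
      (Nat.pow_right_injective le_rfl)
  refine hsum.of_norm_bounded fun d => ?_
  rw [norm_mul, norm_pow, Real.norm_eq_abs A, Real.norm_of_nonneg (Real.exp_nonneg _)]
  push_cast
  rw [neg_one_mul, pow_right_comm]
  gcongr

theorem summable_and_tsum_le_of_le_on_sides {t f g : ℕ → ℝ} (ht : ∀ k, 0 ≤ t k) (κ : ℕ)
    (hf : Summable f) (hf0 : ∀ d, 0 ≤ f d) (hg : Summable g)
    (hleft : ∀ k ≤ κ, t k ≤ f (κ - k)) (hright : ∀ d, t (d + (κ + 1)) ≤ g d) :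
    Summable t ∧ ∑' k, t k ≤ ∑' d, f d + ∑' d, g d := by
  have htail : Summable fun d => t (d + (κ + 1)) := hg.of_nonneg_of_le (fun _ => ht _) hright
  have hsum : Summable t := (summable_nat_add_iff (κ + 1)).1 htail
  have hhead : ∑ k ∈ Finset.range (κ + 1), t k ≤ ∑' d, f d :=
    calc ∑ k ∈ Finset.range (κ + 1), t k ≤ ∑ k ∈ Finset.range (κ + 1), f (κ - k) :=
          Finset.sum_le_sum fun k hk => hleft k (Finset.mem_range_succ_iff.1 hk)
      _ = ∑ d ∈ Finset.range (κ + 1), f d := Finset.sum_flip f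
      _ ≤ ∑' d, f d := hf.sum_le_tsum _ fun d _ => hf0 d
  refine ⟨hsum, ?_⟩
  rw [← hsum.sum_add_tsum_nat_add (κ + 1)]
  exact add_le_add hhead (htail.tsum_le_tsum hright hg)

/-- Diagonal choice: `b` is supported on sparse indices `φ j`, where it equals `(w j (φ j))⁻¹`, and
each `m` is served infinitely often, namely by all `j` with `j.unpair.1 = m`. -/
theorem exists_bddAbove_mul_and_not_bddAbove_mul {w u : ℕ → ℕ → ℝ} (hw : ∀ L k, 0 < w L k)
    (hmono : Monotone w) (hfreq : ∀ m L (c : ℝ), ∃ᶠ k in atTop, c * w L k < u m k) :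
    ∃ b : ℕ → ℝ, 0 ≤ b ∧ (∀ L, BddAbove (Set.range fun k => b k * w L k)) ∧
      ∀ m, ¬BddAbove (Set.range fun k => b k * u m k) := by
  obtain ⟨φ, hφ, hφu⟩ := extraction_forall_of_frequently fun j : ℕ => hfreq j.unpair.1 j j
  set b : ℕ → ℝ := Function.extend φ (fun j => (w j (φ j))⁻¹) 0
  have hbφ (j : ℕ) : b (φ j) = (w j (φ j))⁻¹ := hφ.injective.extend_apply _ _ j
  have hb0 {k : ℕ} (hk : ¬∃ j, φ j = k) : b k = 0 := Function.extend_apply' _ _ k hk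
  refine ⟨b, fun k => ?_, fun L => ?_, ?_⟩
  · by_cases hk : ∃ j, φ j = k
    · obtain ⟨j, rfl⟩ := hk
      exact (hbφ j).symm ▸ (inv_pos.2 (hw _ _)).le
    · exact (hb0 hk).ge
  · refine (isBoundedUnder_of_eventually_le (a := 1) ?_).bddAbove_range
    filter_upwards [eventually_ge_atTop (φ L)] with k hLk
    by_cases hk : ∃ j, φ j = k
    · obtain ⟨j, rfl⟩ := hk
      rw [hbφ, inv_mul_le_one₀ (hw _ _)]
      exact hmono (hφ.le_iff_le.1 hLk) _
    · rw [hb0 hk, zero_mul]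
      exact zero_le_one
  · rintro m ⟨C, hC⟩
    obtain ⟨i, hi⟩ := exists_nat_gt C
    have hlarge := hφu (Nat.pair m i)
    rw [Nat.unpair_pair, ← lt_inv_mul_iff₀' (hw _ _), ← hbφ] at hlarge
    have hpair : (i : ℝ) ≤ Nat.pair m i := mod_cast Nat.right_le_pair m i
    exact (hi.trans_le hpair).not_ge (hlarge.le.trans (hC ⟨_, rfl⟩))

end Sequences

section LogWeights

/-- The radial weights of condition (LOG), with constants `A` and `q` that may depend on the weight
and without continuity. Radiality is encoded in `nonInc`; that `v z → 0` as `‖z‖ → 1` follows from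
`nonInc` and `exists_log2`. -/
structure IsLogWeight (v : ℂ → ℝ) : Prop where
  pos : ∀ z ∈ uD, 0 < v z
  nonInc : NonInc v
  exists_log1 : ∃ A > 0, Log1 A v
  exists_log2 : ∃ q > 0, q < 1 ∧ Log2 q v

variable {v w : ℂ → ℝ}

theorem Log1.le_pow_mul {A : ℝ} (hv : Log1 A v) (hA : 0 ≤ A) (κ d : ℕ) :
    v (rseq κ) ≤ A ^ d * v (rseq (d + κ)) := by
  induction d with
  | zero => simp
  | succ d ih =>
    calc v (rseq κ) ≤ A ^ d * v (rseq (d + κ)) := ih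
      _ ≤ A ^ d * (A * v (rseq (d + κ + 1))) := by gcongr; exact hv _
      _ = A ^ (d + 1) * v (rseq (d + 1 + κ)) := by rw [← mul_assoc, ← pow_succ, add_right_comm]

theorem Log2.le_pow_mul {q : ℝ} (hv : Log2 q v) (hq : 0 ≤ q) (κ d : ℕ) :
    v (rseq (d + κ)) ≤ q ^ d * v (rseq κ) := by
  induction d with
  | zero => simp
  | succ d ih =>
    calc v (rseq (d + 1 + κ)) = v (rseq (d + κ + 1)) := by rw [add_right_comm]
      _ ≤ q * v (rseq (d + κ)) := hv _
      _ ≤ q * (q ^ d * v (rseq κ)) := by gcongr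
      _ = q ^ (d + 1) * v (rseq κ) := by rw [← mul_assoc, ← pow_succ']

theorem NonInc.le_rseq (hv : NonInc v) {z : ℂ} (hz : z ∈ uD) {κ : ℕ} (h : rseq κ ≤ ‖z‖) :
    v z ≤ v (rseq κ) :=
  hv _ (rseq_mem_uD κ) z hz ((norm_rseq κ).trans_le h)

theorem NonInc.rseq_le (hv : NonInc v) {z : ℂ} (hz : z ∈ uD) {κ : ℕ} (h : ‖z‖ ≤ rseq κ) :
    v (rseq κ) ≤ v z :=
  hv z hz _ (rseq_mem_uD κ) (h.trans_eq (norm_rseq κ).symm)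

theorem NonInc.le_mul_of_forall_rseq (hv : NonInc v) (hw : NonInc w) {A c : ℝ} (hwA : Log1 A w)
    (hA : 0 ≤ A) (hc : 0 ≤ c) (h : ∀ κ, v (rseq κ) ≤ c * w (rseq κ)) {z : ℂ} (hz : z ∈ uD) :
    v z ≤ c * A * w z := by
  obtain ⟨κ, hle, hlt⟩ := exists_rseq_le_lt (norm_nonneg z) hz
  calc v z ≤ v (rseq κ) := hv.le_rseq hz hle
    _ ≤ c * w (rseq κ) := h κ
    _ ≤ c * (A * w (rseq (κ + 1))) := by gcongr; exact hwA κ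
    _ ≤ c * (A * w z) := by gcongr; exact hw.rseq_le hz hlt.le
    _ = c * A * w z := (mul_assoc _ _ _).symm

theorem frequently_mul_lt_of_not_dominated (hv : NonInc v) (hw : IsLogWeight w)
    (h : ∀ C > 0, ∃ z ∈ uD, C * w z < v z) (c : ℝ) :
    ∃ᶠ κ in atTop, c * w (rseq κ) < v (rseq κ) := by
  refine fun hev => ?_
  have hbdd : BddAbove (Set.range fun κ : ℕ => v (rseq κ) / w (rseq κ)) := by
    refine (isBoundedUnder_of_eventually_le (a := c) ?_).bddAbove_range
    filter_upwards [hev] with κ hκ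
    exact (div_le_iff₀ (hw.pos _ (rseq_mem_uD κ))).2 (not_lt.1 hκ)
  obtain ⟨C, hC0, hC⟩ := hbdd.exists_ge 1
  obtain ⟨A, hA, hwA⟩ := hw.exists_log1
  have hCpos : 0 < C := one_pos.trans_le hC0
  obtain ⟨z, hz, hlt⟩ := h (C * A) (mul_pos hCpos hA)
  exact hlt.not_ge <| hv.le_mul_of_forall_rseq hw.nonInc hwA hA.le hCpos.le
    (fun κ => (div_le_iff₀ (hw.pos _ (rseq_mem_uD κ))).1 (hC _ ⟨κ, rfl⟩)) hz

theorem IsLogWeight.sup (hv : IsLogWeight v) (hw : IsLogWeight w) : IsLogWeight (v ⊔ w) := by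
  obtain ⟨A, hA, hvA⟩ := hv.exists_log1
  obtain ⟨A', -, hwA⟩ := hw.exists_log1
  obtain ⟨q, hq, hq1, hvq⟩ := hv.exists_log2
  obtain ⟨q', -, hq1', hwq⟩ := hw.exists_log2
  have hv0 (κ : ℕ) := (hv.pos _ (rseq_mem_uD κ)).le
  have hw0 (κ : ℕ) := (hw.pos _ (rseq_mem_uD κ)).le
  exact
    { pos := fun z hz => lt_sup_of_lt_left (hv.pos z hz)
      nonInc := fun z hz x hx h => sup_le_sup (hv.nonInc z hz x hx h) (hw.nonInc z hz x hx h)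
      exists_log1 := ⟨max A A', lt_sup_of_lt_left hA, fun κ => sup_le
        ((hvA κ).trans (mul_le_mul le_sup_left le_sup_left (hv0 _) (by positivity)))
        ((hwA κ).trans (mul_le_mul le_sup_right le_sup_right (hw0 _) (by positivity)))⟩
      exists_log2 := ⟨max q q', lt_sup_of_lt_left hq, sup_lt_iff.2 ⟨hq1, hq1'⟩, fun κ => sup_le
        ((hvq κ).trans (mul_le_mul le_sup_left le_sup_left (hv0 _) (by positivity)))
        ((hwq κ).trans (mul_le_mul le_sup_right le_sup_right (hw0 _) (by positivity)))⟩ }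

end LogWeights

section LacunarySeries

variable {v : ℂ → ℝ}

/-- For `‖z‖` in the block `[r_κ, r_{κ+1})`, the terms with `k ≤ κ` decay geometrically away from
`κ` because `v` does, the others super-exponentially because `‖z‖ ^ n_k` does. -/
theorem IsLogWeight.exists_tsum_kernel_le (hv : IsLogWeight v) :
    ∃ B > 0, ∀ z ∈ uD, Summable (fun k => v z / v (rseq k) * ‖z‖ ^ lacExp k) ∧
      ∑' k, v z / v (rseq k) * ‖z‖ ^ lacExp k ≤ B := by
  obtain ⟨A, hA, hvA⟩ := hv.exists_log1
  obtain ⟨q, hq, hq1, hvq⟩ := hv.exists_log2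
  have hgeom : Summable fun d : ℕ => q ^ d := summable_geometric_of_lt_one hq.le hq1
  have hexp : Summable fun d : ℕ => A * (A ^ d * Real.exp (-2 ^ d)) :=
    (summable_pow_mul_exp_neg_two_pow A).mul_left A
  refine ⟨∑' d : ℕ, q ^ d + ∑' d : ℕ, A * (A ^ d * Real.exp (-2 ^ d)),
    add_pos_of_pos_of_nonneg (hgeom.tsum_pos (fun d => by positivity) 0 (by simp))
      (tsum_nonneg fun d => by positivity), fun z hz => ?_⟩
  obtain ⟨κ, hle, hlt⟩ := exists_rseq_le_lt (norm_nonneg z) hz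
  have hr (k : ℕ) : 0 < v (rseq k) := hv.pos _ (rseq_mem_uD k)
  have hvz : 0 < v z := hv.pos z hz
  have hvκ : v z ≤ v (rseq κ) := hv.nonInc.le_rseq hz hle
  refine summable_and_tsum_le_of_le_on_sides
    (fun k => mul_nonneg (div_pos hvz (hr k)).le (by positivity)) κ
    hgeom (fun d => by positivity) hexp (fun k hk => ?_) (fun d => ?_)
  · have hratio : v z / v (rseq k) ≤ q ^ (κ - k) := by
      have hiter := hvq.le_pow_mul hq.le k (κ - k)
      rw [Nat.sub_add_cancel hk] at hiter
      exact (div_le_iff₀ (hr k)).2 (hvκ.trans hiter)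
    exact (mul_le_of_le_one_right (div_pos hvz (hr k)).le
      (pow_le_one₀ (norm_nonneg z) (le_of_lt hz))).trans hratio
  · have hratio : v z / v (rseq (d + (κ + 1))) ≤ A * A ^ d := by
      rw [div_le_iff₀ (hr _), ← pow_succ', ← add_assoc, add_right_comm]
      exact hvκ.trans (hvA.le_pow_mul hA.le κ (d + 1))
    rw [← mul_assoc]
    exact mul_le_mul hratio ((pow_le_pow_left₀ (norm_nonneg z) hlt.le _).trans
      (rseq_succ_pow_lacExp_le κ d)) (by positivity) (by positivity)

theorem IsLogWeight.exists_mul_pow_lacExp_le (hv : IsLogWeight v) :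
    ∃ B > 0, ∀ k, ∀ z ∈ uD, v z * ‖z‖ ^ lacExp k ≤ B * v (rseq k) := by
  obtain ⟨B, hB0, hB⟩ := hv.exists_tsum_kernel_le
  refine ⟨B, hB0, fun k z hz => ?_⟩
  obtain ⟨hsum, hle⟩ := hB z hz
  have hr (i : ℕ) : 0 < v (rseq i) := hv.pos _ (rseq_mem_uD i)
  have hterm : v z / v (rseq k) * ‖z‖ ^ lacExp k ≤ B :=
    (hsum.le_tsum k fun i _ =>
      mul_nonneg (div_pos (hv.pos z hz) (hr i)).le (by positivity)).trans hle
  rwa [div_mul_eq_mul_div, div_le_iff₀ (hr k)] at hterm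

theorem holo_tsum_mul_pow {c : ℕ → ℂ} {e : ℕ → ℕ}
    (h : ∀ z ∈ uD, Summable fun k => ‖c k * z ^ e k‖) : Holo fun z => ∑' k, c k * z ^ e k := by
  intro z hz
  obtain ⟨ρ, hzρ, hρ1⟩ := exists_between (show ‖z‖ < 1 from hz)
  have hρ : ‖(ρ : ℂ)‖ = ρ := by
    rw [Complex.norm_real, Real.norm_of_nonneg ((norm_nonneg z).trans hzρ.le)]
  have hdiff : DifferentiableOn ℂ (fun z => ∑' k, c k * z ^ e k) (Metric.ball 0 ρ) := by
    refine differentiableOn_tsum_of_summable_norm (h ρ (hρ.trans_lt hρ1))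
      (fun k => by fun_prop) Metric.isOpen_ball fun k x hx => ?_
    rw [norm_mul, norm_mul, norm_pow, norm_pow, hρ]
    gcongr
    exact (mem_ball_zero_iff.1 hx).le
  exact (hdiff.differentiableAt
    (Metric.isOpen_ball.mem_nhds (mem_ball_zero_iff.2 hzρ))).differentiableWithinAt

/-- The lacunary series `∑ b_k z ^ n_k` with real coefficients, `n_k` being `lacExp k`. Outside its
region of convergence the value is the junk value of `tsum`. -/
def lacunarySeries (b : ℕ → ℝ) (z : ℂ) : ℂ := ∑' k, (b k : ℂ) * z ^ lacExp k

variable {b : ℕ → ℝ}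

theorem norm_lacunary_term (hb : 0 ≤ b) (z : ℂ) (k : ℕ) :
    ‖(b k : ℂ) * z ^ lacExp k‖ = b k * ‖z‖ ^ lacExp k := by
  rw [norm_mul, Complex.norm_real, Real.norm_of_nonneg (hb k), norm_pow]

theorem IsLogWeight.exists_lacunary_tsum_le (hv : IsLogWeight v) (hb : 0 ≤ b)
    (hbv : BddAbove (Set.range fun k => b k * v (rseq k))) :
    ∃ C, ∀ z ∈ uD, Summable (fun k => b k * ‖z‖ ^ lacExp k) ∧
      v z * ∑' k, b k * ‖z‖ ^ lacExp k ≤ C := by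
  obtain ⟨B, -, hB⟩ := hv.exists_tsum_kernel_le
  obtain ⟨D, hD0, hD⟩ := hbv.exists_ge 0
  refine ⟨D * B, fun z hz => ?_⟩
  obtain ⟨hsum, hle⟩ := hB z hz
  have hvz : 0 < v z := hv.pos z hz
  have hterm (k : ℕ) : v z * (b k * ‖z‖ ^ lacExp k) ≤ D * (v z / v (rseq k) * ‖z‖ ^ lacExp k) := by
    have hbk : b k ≤ D / v (rseq k) :=
      (le_div_iff₀ (hv.pos _ (rseq_mem_uD k))).2 (hD _ ⟨k, rfl⟩)
    calc v z * (b k * ‖z‖ ^ lacExp k) ≤ v z * (D / v (rseq k) * ‖z‖ ^ lacExp k) := by gcongr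
      _ = D * (v z / v (rseq k) * ‖z‖ ^ lacExp k) := by ring
  have hsum' : Summable fun k => v z * (b k * ‖z‖ ^ lacExp k) :=
    (hsum.mul_left D).of_nonneg_of_le
      (fun k => mul_nonneg hvz.le (mul_nonneg (hb k) (by positivity))) hterm
  refine ⟨(summable_mul_left_iff hvz.ne').1 hsum', ?_⟩
  calc v z * ∑' k, b k * ‖z‖ ^ lacExp k = ∑' k, v z * (b k * ‖z‖ ^ lacExp k) := tsum_mul_left.symm
    _ ≤ ∑' k, D * (v z / v (rseq k) * ‖z‖ ^ lacExp k) := hsum'.tsum_le_tsum hterm (hsum.mul_left D)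
    _ = D * ∑' k, v z / v (rseq k) * ‖z‖ ^ lacExp k := tsum_mul_left
    _ ≤ D * B := by gcongr

theorem IsLogWeight.lacunarySeries_mem_haSet (hv : IsLogWeight v) (hb : 0 ≤ b)
    (hbv : BddAbove (Set.range fun k => b k * v (rseq k))) : lacunarySeries b ∈ HaSet v := by
  obtain ⟨C, hC⟩ := hv.exists_lacunary_tsum_le hb hbv
  have hsum (z : ℂ) (hz : z ∈ uD) : Summable fun k => ‖(b k : ℂ) * z ^ lacExp k‖ := by
    simpa only [norm_lacunary_term hb] using (hC z hz).1
  refine ⟨holo_tsum_mul_pow hsum, C, fun z hz => le_trans ?_ (hC z hz).2⟩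
  have hnorm := norm_tsum_le_tsum_norm (hsum z hz)
  simp only [norm_lacunary_term hb] at hnorm
  exact mul_le_mul_of_nonneg_left hnorm (hv.pos z hz).le

theorem coeff_div_four_le_norm_lacunarySeries (hb : 0 ≤ b) {k : ℕ}
    (hsum : Summable fun i => b i * rseq k ^ lacExp i) :
    b k / 4 ≤ ‖lacunarySeries b (rseq k)‖ := by
  have hterm (i : ℕ) : 0 ≤ b i * rseq k ^ lacExp i :=
    mul_nonneg (hb i) (pow_nonneg (rseq_nonneg k) _)
  have hreal : lacunarySeries b (rseq k) = ((∑' i, b i * rseq k ^ lacExp i : ℝ) : ℂ) := by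
    push_cast [lacunarySeries]
    rfl
  rw [hreal, Complex.norm_real, Real.norm_of_nonneg (tsum_nonneg hterm)]
  calc b k / 4 = b k * (1 / 4) := by ring
    _ ≤ b k * rseq k ^ lacExp k :=
      mul_le_mul_of_nonneg_left (one_fourth_le_rseq_pow_lacExp k) (hb k)
    _ ≤ ∑' i, b i * rseq k ^ lacExp i := hsum.le_tsum k fun i _ => hterm i

theorem bddAbove_of_lacunarySeries_mem_haSet (hv : ∀ z ∈ uD, 0 < v z) (hb : 0 ≤ b)
    (hsum : ∀ k, Summable fun i => b i * rseq k ^ lacExp i) (h : lacunarySeries b ∈ HaSet v) :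
    BddAbove (Set.range fun k => b k * v (rseq k)) := by
  obtain ⟨-, C, hC⟩ := h
  refine ⟨4 * C, ?_⟩
  rintro _ ⟨k, rfl⟩
  have hlower := mul_le_mul_of_nonneg_left
    (coeff_div_four_le_norm_lacunarySeries hb (hsum k)) (hv _ (rseq_mem_uD k)).le
  linarith [hC _ (rseq_mem_uD k)]

end LacunarySeries

section AssociatedWeights

variable {v w : ℂ → ℝ}

theorem growthTilde_le {z : ℂ} (hw : 0 ≤ w z) (hz : z ∈ uD) : growthTilde w z ≤ w z :=
  Real.sSup_le (by rintro _ ⟨g, -, hg, rfl⟩; exact hg z hz) hw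

theorem norm_le_growthTilde {g : ℂ → ℂ} (hg : Holo g) (hgw : ∀ x ∈ uD, ‖g x‖ ≤ w x) {z : ℂ}
    (hz : z ∈ uD) : ‖g z‖ ≤ growthTilde w z :=
  le_csSup ⟨w z, by rintro _ ⟨f, -, hf, rfl⟩; exact hf z hz⟩ ⟨g, hg, hgw, rfl⟩

/-- The growth function at `z` in the block `[r_κ, r_{κ+1})` is attained, up to a constant, by the
monomial `z ^ n_κ / v(r_κ)`. -/
theorem IsLogWeight.essential (hv : IsLogWeight v) : Essential v := by
  obtain ⟨B, hB, hmono⟩ := hv.exists_mul_pow_lacExp_le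
  obtain ⟨A, hA, hvA⟩ := hv.exists_log1
  refine ⟨4 * A * B, by positivity, fun z hz => ⟨growthTilde_le
    (one_div_pos.2 (hv.pos z hz)).le hz, ?_⟩⟩
  obtain ⟨κ, hle, hlt⟩ := exists_rseq_le_lt (norm_nonneg z) hz
  have hrκ : 0 < v (rseq κ) := hv.pos _ (rseq_mem_uD κ)
  have hvz : 0 < v z := hv.pos z hz
  set g : ℂ → ℂ := fun x => ((B * v (rseq κ))⁻¹ : ℝ) * x ^ lacExp κ
  have hg (x : ℂ) : ‖g x‖ = (B * v (rseq κ))⁻¹ * ‖x‖ ^ lacExp κ := by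
    rw [norm_mul, Complex.norm_real, Real.norm_of_nonneg (by positivity), norm_pow]
  have hgholo : Holo g := by unfold Holo; fun_prop
  have hgv (x : ℂ) (hx : x ∈ uD) : ‖g x‖ ≤ 1 / v x := by
    rw [hg, le_div_iff₀ (hv.pos x hx), mul_assoc, inv_mul_le_one₀ (by positivity), mul_comm]
    exact hmono κ x hx
  have hvκ : v (rseq κ) ≤ A * v z :=
    (hvA κ).trans (mul_le_mul_of_nonneg_left (hv.nonInc.rseq_le hz hlt.le) hA.le)
  have hpeak : 1 / 4 ≤ ‖z‖ ^ lacExp κ :=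
    (one_fourth_le_rseq_pow_lacExp κ).trans (pow_le_pow_left₀ (rseq_nonneg κ) hle _)
  calc 1 / v z = 4 * A * B * ((B * (A * v z))⁻¹ * (1 / 4)) := by field_simp
    _ ≤ 4 * A * B * ((B * v (rseq κ))⁻¹ * ‖z‖ ^ lacExp κ) := by gcongr
    _ = 4 * A * B * ‖g z‖ := by rw [hg]
    _ ≤ 4 * A * B * growthTilde (fun x => 1 / v x) z := by
      gcongr
      exact norm_le_growthTilde hgholo hgv hz

theorem Essential.exists_assocWeight_bounds (hv : Essential v) (hpos : ∀ z ∈ uD, 0 < v z) :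
    ∃ C > 0, ∀ z ∈ uD, v z ≤ assocWeight v z ∧ assocWeight v z ≤ C * v z := by
  obtain ⟨C, hC, h⟩ := hv
  refine ⟨C, hC, fun z hz => ?_⟩
  obtain ⟨hupper, hlower⟩ := h z hz
  have hvz := hpos z hz
  have hgrowth : 0 < growthTilde (fun x => 1 / v x) z :=
    pos_of_mul_pos_right ((one_div_pos.2 hvz).trans_le hlower) hC.le
  constructor
  · rwa [assocWeight, le_inv_comm₀ hvz hgrowth, ← one_div]
  · rw [assocWeight, inv_le_iff_one_le_mul₀ hgrowth]
    calc 1 = 1 / v z * v z := by field_simp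
      _ ≤ C * growthTilde (fun x => 1 / v x) z * v z := by gcongr
      _ = C * v z * growthTilde (fun x => 1 / v x) z := by ring

end AssociatedWeights

section DoubleSequences

variable {a : ℕ → ℕ → ℂ → ℝ}

theorem SeqLOG.isLogWeight {q A : ℝ} (h : SeqLOG q A a) (hq : 0 < q) (hq1 : q < 1) (hA : 0 < A)
    (hpos : ∀ N n, ∀ z ∈ uD, 0 < a N n z) (N n : ℕ) : IsLogWeight (a N n) :=
  let ⟨_, hni, _, hlog1, hlog2⟩ := h N n
  ⟨hpos N n, hni, ⟨A, hA, hlog1⟩, ⟨q, hq, hq1, hlog2⟩⟩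

theorem finMax_eq_sup' (a : ℕ → ℕ → ℂ → ℝ) (nn : ℕ → ℕ) {L : ℕ} (hL : 1 ≤ L) :
    finMax a nn L = (Finset.Icc 1 L).sup' (Finset.nonempty_Icc.2 hL) fun N => a N (nn N) := by
  ext z
  rw [Finset.sup'_apply, Finset.sup'_eq_csSup_image, finMax]
  congr 1
  ext t
  simp [and_assoc, eq_comm]

theorem le_finMax (a : ℕ → ℕ → ℂ → ℝ) (nn : ℕ → ℕ) {N L : ℕ} (hN : 1 ≤ N) (hNL : N ≤ L) :
    a N (nn N) ≤ finMax a nn L := by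
  rw [finMax_eq_sup' a nn (hN.trans hNL)]
  exact Finset.le_sup' (fun N => a N (nn N)) (Finset.mem_Icc.2 ⟨hN, hNL⟩)

theorem finMax_mono (a : ℕ → ℕ → ℂ → ℝ) (nn : ℕ → ℕ) {L L' : ℕ} (hL : 1 ≤ L) (h : L ≤ L') :
    finMax a nn L ≤ finMax a nn L' := by
  rw [finMax_eq_sup' a nn hL]
  exact Finset.sup'_le _ _ fun N hN =>
    le_finMax a nn (Finset.mem_Icc.1 hN).1 ((Finset.mem_Icc.1 hN).2.trans h)

theorem finMax_mem (a : ℕ → ℕ → ℂ → ℝ) (nn : ℕ → ℕ) {L : ℕ} (hL : 1 ≤ L) (z : ℂ) :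
    ∃ N ∈ Finset.Icc 1 L, finMax a nn L z = a N (nn N) z := by
  rw [finMax_eq_sup' a nn hL, Finset.sup'_apply]
  exact Finset.exists_mem_eq_sup' _ _

theorem isLogWeight_finMax (ha : ∀ N n, IsLogWeight (a N n)) (nn : ℕ → ℕ) {L : ℕ} (hL : 1 ≤ L) :
    IsLogWeight (finMax a nn L) := by
  rw [finMax_eq_sup' a nn hL]
  exact Finset.sup'_induction _ _ (fun _ hv _ hw => hv.sup hw) fun N _ => ha N (nn N)

theorem condBTilde_iff_condB (ha : ∀ N n, IsLogWeight (a N n)) : CondBTilde a ↔ CondB a := by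
  refine forall_congr' fun nn => exists_congr fun m => forall_congr' fun M =>
    exists_congr fun L => and_congr_right fun hL => ?_
  have hmax := isLogWeight_finMax ha nn hL
  obtain ⟨C, hC, hv⟩ := (ha M m).essential.exists_assocWeight_bounds (ha M m).pos
  obtain ⟨D, hD, hw⟩ := hmax.essential.exists_assocWeight_bounds hmax.pos
  constructor
  · rintro ⟨c, hc, h⟩
    refine ⟨c * D, mul_pos hc hD, fun z hz => ?_⟩
    calc a M m z ≤ assocWeight (a M m) z := (hv z hz).1
      _ ≤ c * assocWeight (finMax a nn L) z := h z hz
      _ ≤ c * (D * finMax a nn L z) := mul_le_mul_of_nonneg_left (hw z hz).2 hc.le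
      _ = c * D * finMax a nn L z := (mul_assoc _ _ _).symm
  · rintro ⟨c, hc, h⟩
    refine ⟨C * c, mul_pos hC hc, fun z hz => ?_⟩
    calc assocWeight (a M m) z ≤ C * a M m z := (hv z hz).2
      _ ≤ C * (c * finMax a nn L z) := mul_le_mul_of_nonneg_left (h z hz) hC.le
      _ = C * c * finMax a nn L z := (mul_assoc _ _ _).symm
      _ ≤ C * c * assocWeight (finMax a nn L) z :=
        mul_le_mul_of_nonneg_left (hw z hz).1 (mul_pos hC hc).le

theorem haSet_anti {v w : ℂ → ℝ} (h : ∀ z ∈ uD, v z ≤ w z) : HaSet w ⊆ HaSet v := by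
  rintro f ⟨hf, C, hC⟩
  exact ⟨hf, C, fun z hz => (mul_le_mul_of_nonneg_right (h z hz) (norm_nonneg _)).trans (hC z hz)⟩


theorem CondB.iInter_iUnion_subset (hB : CondB a) :
    ⋂ N, ⋃ n, HaSet (a N n) ⊆ ⋃ n, ⋂ N, HaSet (a N n) := by
  intro f hf
  simp only [Set.mem_iInter, Set.mem_iUnion] at hf ⊢
  choose nn hnn using hf
  choose C hC using fun N => (hnn N).2
  obtain ⟨m, hm⟩ := hB nn
  refine ⟨m, fun M => ⟨(hnn M).1, ?_⟩⟩
  obtain ⟨L, hL, c, hc, h⟩ := hm M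
  obtain ⟨D, hD⟩ := ((Finset.Icc 1 L).image C).bddAbove
  refine ⟨c * D, fun z hz => ?_⟩
  obtain ⟨N, hN, hmax⟩ := finMax_mem a nn hL z
  calc a M m z * ‖f z‖ ≤ c * finMax a nn L z * ‖f z‖ :=
        mul_le_mul_of_nonneg_right (h z hz) (norm_nonneg _)
    _ = c * (a N (nn N) z * ‖f z‖) := by rw [hmax, mul_assoc]
    _ ≤ c * D := mul_le_mul_of_nonneg_left
        ((hC N z hz).trans (hD (Finset.mem_image_of_mem C hN))) hc.le

theorem exists_coeff_of_not_condB (ha : ∀ N n, IsLogWeight (a N n)) (h : ¬CondB a) :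
    ∃ (nn : ℕ → ℕ) (b : ℕ → ℝ), 0 ≤ b ∧
      (∀ N ≥ 1, BddAbove (Set.range fun k => b k * a N (nn N) (rseq k))) ∧
      ∀ m, ∃ M, ¬BddAbove (Set.range fun k => b k * a M m (rseq k)) := by
  simp only [CondB] at h
  push Not at h
  obtain ⟨nn, h⟩ := h
  choose M hM using h
  have hmax (L : ℕ) : IsLogWeight (finMax a nn (L + 1)) := isLogWeight_finMax ha nn L.succ_pos
  obtain ⟨b, hb, hbw, hbu⟩ := exists_bddAbove_mul_and_not_bddAbove_mul
    (w := fun L k => finMax a nn (L + 1) (rseq k)) (u := fun m k => a (M m) m (rseq k))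
    (fun L k => (hmax L).pos _ (rseq_mem_uD k))
    (fun L L' hL k => finMax_mono a nn L.succ_pos (Nat.succ_le_succ hL) _)
    (fun m L => frequently_mul_lt_of_not_dominated (ha _ _).nonInc (hmax L)
      (hM m (L + 1) L.succ_pos))
  refine ⟨nn, b, hb, fun N hN => (hbw N).range_mono _ fun k => ?_, fun m => ⟨M m, hbu m⟩⟩
  exact mul_le_mul_of_nonneg_left (le_finMax a nn hN N.le_succ _) (hb k)

theorem condB_of_iInter_iUnion_subset (ha : ∀ N n, IsLogWeight (a N n))
    (h01 : ∀ n, ∀ z ∈ uD, a 0 n z ≤ a 1 n z)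
    (hsub : ⋂ N, ⋃ n, HaSet (a N n) ⊆ ⋃ n, ⋂ N, HaSet (a N n)) : CondB a := by
  by_contra hB
  obtain ⟨nn, b, hb, hbdd, hunbdd⟩ := exists_coeff_of_not_condB ha hB
  have hmem (N : ℕ) (hN : N ≥ 1) : lacunarySeries b ∈ HaSet (a N (nn N)) :=
    (ha N (nn N)).lacunarySeries_mem_haSet hb (hbdd N hN)
  have hinter : lacunarySeries b ∈ ⋂ N, ⋃ n, HaSet (a N n) := by
    refine Set.mem_iInter.2 fun N => Set.mem_iUnion.2 ?_
    rcases N.eq_zero_or_pos with rfl | hN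
    · exact ⟨nn 1, haSet_anti (h01 (nn 1)) (hmem 1 le_rfl)⟩
    · exact ⟨nn N, hmem N hN⟩
  obtain ⟨m, hm⟩ := Set.mem_iUnion.1 (hsub hinter)
  obtain ⟨M, hM⟩ := hunbdd m
  obtain ⟨C, hC⟩ := (ha 1 (nn 1)).exists_lacunary_tsum_le hb (hbdd 1 le_rfl)
  exact hM <| bddAbove_of_lacunarySeries_mem_haSet (ha M m).pos hb
    (fun k => by simpa only [norm_rseq] using (hC _ (rseq_mem_uD k)).1) (Set.mem_iInter.1 hm M)

end DoubleSequences

theorem interchange_iff_condBTilde_general (a : ℕ → ℕ → ℂ → ℝ)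
    (ha : ∀ N n, IsLogWeight (a N n)) (h01 : ∀ n, ∀ z ∈ uD, a 0 n z ≤ a 1 n z) :
    (⋂ N : ℕ, ⋃ n : ℕ, HaSet (a N n)) = (⋃ n : ℕ, ⋂ N : ℕ, HaSet (a N n)) ↔
      CondBTilde a := by
  rw [condBTilde_iff_condB ha]
  exact ⟨fun h => condB_of_iInter_iUnion_subset ha h01 h.le,
    fun h => h.iInter_iUnion_subset.antisymm Set.iUnion_iInter_subset⟩

/-- under (LOG), AH(𝔻) = 𝒱H(𝔻) algebraically iff 𝒜 satisfies (B)~. -/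
theorem interchange_iff_condBTilde (a' A : ℝ) (ha0 : 0 < a') (ha1 : a' < 1) (hA : 1 < A)
    (a : ℕ → ℕ → ℂ → ℝ)
    (hW : ∀ N n, IsWeight (a N n)) (hMono : MonoSeq a) (hLOG : SeqLOG a' A a) :
    (⋂ N : ℕ, ⋃ n : ℕ, HaSet (a N n)) = (⋃ n : ℕ, ⋂ N : ℕ, HaSet (a N n)) ↔
      CondBTilde a := by
  have hLW := hLOG.isLogWeight ha0 ha1 (one_pos.trans hA) fun N n => (hW N n).2
  exact interchange_iff_condBTilde_general a hLW fun n z hz => (hMono 0 n z hz).2
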